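/- Let r be a prime number and ζ = exp(2πi/r) ∈ ℂ. On (ℤ/rℤ)^{11} × (ℤ/rℤ)^{11} define Q(x,y) = ∑_{i=1}^{11} x_i y_i ∈ ℤ/rℤ, and for an integer m and g = (x,y) set ω(m,g) = exp(2πi·(r−1)·m·q̃/r) ∈ ℂ, where q̃ ∈ {0,…,r−1} lifts Q(g). In ℂ[[X]] define Z₀ = (1/r²)·F(X^{r²}) + (1/r)·X^{r²−1}·∑_{j=0}^{r−1} ζ^{−j}·F(ζ^j X) and, for 0 ≤ m ≤ r−1, Z^{(m)} = (1/r)·ζ^{−m}·X^{r²−1}·F(ζ^m X). Then Z₀ + ∑_{g ≠ 0} ∑_{m=0}^{r−1} ω(m,g)·Z^{(m)} = (1/r²)·F(X^{r²}) + r^{21}·X^{r²−1}·F(X) + r^{10}·X^{r²−1}·∑_{m=1}^{r−1} ζ^{−m}·F(ζ^m X), where the outer sum runs over all nonzero g ∈ (ℤ/rℤ)^{11} × (ℤ/rℤ)^{11}. -/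

import Mathlib

open PowerSeries

/-- `c n`: the number of 24-tuples `(λ₁,…,λ₂₄)` of integer partitions with
`|λ₁| + ⋯ + |λ₂₄| = n`. -/
noncomputable def numPart (n : ℕ) : ℕ :=
  Nat.card { f : Fin 24 → Σ m : ℕ, Nat.Partition m // (∑ i, (f i).1) = n }

/-- `F = ∑_{n≥0} c_n X^n` in `ℂ[[X]]`. -/
noncomputable def F : PowerSeries ℂ := PowerSeries.mk fun n => (numPart n : ℂ)

/-- `ζ = exp(2πi/r)`. -/
noncomputable def zeta (r : ℕ) : ℂ := Complex.exp (2 * Real.pi * Complex.I / r)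

/-- The split quadratic form `Q(x,y) = ∑_{i=1}^{11} x_i y_i` on `(ℤ/rℤ)^{11} × (ℤ/rℤ)^{11}`. -/
def Q (r : ℕ) (g : (Fin 11 → ZMod r) × (Fin 11 → ZMod r)) : ZMod r :=
  ∑ i, g.1 i * g.2 i

/-- `ω(m,g) = exp(2πi·(r−1)·m·q̃/r)`, where `q̃ ∈ {0,…,r−1}` lifts `Q(g)`. -/
noncomputable def omegaFactor (r : ℕ) (m : ℕ) (g : (Fin 11 → ZMod r) × (Fin 11 → ZMod r)) : ℂ :=
  Complex.exp (2 * Real.pi * Complex.I * ((r:ℂ) - 1) * (m:ℂ) * ((Q r g).val : ℂ) / r)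

/-- `F(X^{r²}) = ∑_{k≥0} c_k X^{r²k}`. -/
noncomputable def FXr2 (r : ℕ) : PowerSeries ℂ :=
  PowerSeries.mk fun n => if r^2 ∣ n then (numPart (n / r^2) : ℂ) else 0

/-- `Z₀ = (1/r²)·F(X^{r²}) + (1/r)·X^{r²−1}·∑_{j=0}^{r−1} ζ^{−j}·F(ζ^j X)`. -/
noncomputable def Z0 (r : ℕ) : PowerSeries ℂ :=
  C (1/(r:ℂ)^2) * FXr2 r
    + C (1/(r:ℂ)) * X^(r^2-1) *
        ∑ j ∈ Finset.range r, C ((zeta r ^ j)⁻¹) * rescale (zeta r ^ j) F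

/-- `Z^{(m)} = (1/r)·ζ^{−m}·X^{r²−1}·F(ζ^m X)`. -/
noncomputable def Zm (r : ℕ) (m : ℕ) : PowerSeries ℂ :=
  C (1/(r:ℂ)) * C ((zeta r ^ m)⁻¹) * X^(r^2-1) * rescale (zeta r ^ m) F

/-! The second summand of `Z₀` is `∑ₘ Z⁽ᵐ⁾`, which is exactly the missing term `g = 0` of the outer
sum. Hence everything reduces to the sums `∑_g ω(m, g)` over all `g`. As `ω(m, g) = ψ(-m Q(g))` for
the standard additive character `ψ`, such a sum factors over the hyperbolic planes, and on one
plane summing `ψ(-m x y)` over `y` gives `r` if `m x = 0` and `0` otherwise; there are `gcd(r, m)`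
such `x`, that is `r` of them for `m = 0` and one for `0 < m < r` when `r` is prime. -/

section HyperbolicGaussSum

variable {R R' : Type*} [CommRing R] [Fintype R] [DecidableEq R] [CommRing R'] [IsDomain R']
  {ψ : AddChar R R'}

lemma sum_addChar_mul_mul_of_isPrimitive (hψ : ψ.IsPrimitive) (a : R) :
    ∑ p : R × R, ψ (a * (p.1 * p.2)) = Fintype.card R * Fintype.card {x : R // a * x = 0} := by
  have sum_snd (x : R) :
      ∑ y, ψ (a * (x * y)) = if a * x = 0 then (Fintype.card R : R') else 0 := by
    simpa only [mul_comm _ (a * x), mul_assoc, Nat.cast_ite, Nat.cast_zero]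
      using AddChar.sum_mulShift (a * x) hψ
  simp only [Fintype.sum_prod_type, sum_snd]
  rw [← Finset.sum_filter, Finset.sum_const, nsmul_eq_mul, mul_comm, Fintype.card_subtype]

lemma sum_addChar_mul_sum_mul_of_isPrimitive {ι : Type*} [Fintype ι] [DecidableEq ι]
    (hψ : ψ.IsPrimitive) (a : R) :
    ∑ g : (ι → R) × (ι → R), ψ (a * ∑ i, g.1 i * g.2 i)
      = (Fintype.card R * Fintype.card {x : R // a * x = 0}) ^ Fintype.card ι := by
  rw [← sum_addChar_mul_mul_of_isPrimitive hψ, ← Finset.card_univ, ← Finset.prod_const,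
    Fintype.prod_sum, ← (Equiv.arrowProdEquivProdArrow ι (fun _ ↦ R) (fun _ ↦ R)).sum_comp]
  refine Finset.sum_congr rfl fun p _ ↦ ?_
  rw [Finset.mul_sum]
  exact map_prod ψ.toMonoidHom (fun i ↦ Multiplicative.ofAdd (a * ((p i).1 * (p i).2))) Finset.univ

end HyperbolicGaussSum

lemma card_zmod_natCast_mul_eq_zero (r m : ℕ) [NeZero r] :
    Fintype.card {x : ZMod r // (m : ZMod r) * x = 0} = r.gcd m := by
  have card_ker := IsAddCyclic.card_nsmulAddMonoidHom_ker (G := ZMod r) m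
  rw [Nat.card_zmod] at card_ker
  rw [← card_ker, ← Nat.card_eq_fintype_card]
  exact Nat.card_congr (Equiv.subtypeEquivRight fun x ↦ by simp [AddMonoidHom.mem_ker])

lemma omegaFactor_eq_stdAddChar (r m : ℕ) [NeZero r]
    (g : (Fin 11 → ZMod r) × (Fin 11 → ZMod r)) :
    omegaFactor r m g = ZMod.stdAddChar (-(m : ZMod r) * Q r g) := by
  have exponent_eq : -(m : ZMod r) * Q r g = (((r : ℤ) - 1) * m * (Q r g).val : ℤ) := by
    simp
  rw [exponent_eq, ZMod.stdAddChar_coe, omegaFactor]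
  congr 1
  push_cast
  ring

lemma omegaFactor_zero_right (r m : ℕ) : omegaFactor r m 0 = 1 := by
  simp [omegaFactor, Q]

lemma sum_omegaFactor (r m : ℕ) [NeZero r] :
    ∑ g, omegaFactor r m g = ((r : ℂ) * r.gcd m) ^ 11 := by
  simp only [omegaFactor_eq_stdAddChar, Q]
  rw [sum_addChar_mul_sum_mul_of_isPrimitive (ZMod.isPrimitive_stdAddChar r)]
  simp only [neg_mul, neg_eq_zero, card_zmod_natCast_mul_eq_zero, ZMod.card, Fintype.card_fin]

lemma Z0_eq_add_sum_Zm (r : ℕ) :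
    Z0 r = C (1 / (r : ℂ) ^ 2) * FXr2 r + ∑ m ∈ Finset.range r, Zm r m := by
  rw [Z0, Finset.mul_sum]
  congr 1
  refine Finset.sum_congr rfl fun m _ ↦ ?_
  rw [Zm]
  ring

lemma sum_Zm_add_sum_ne_zero (r : ℕ) [NeZero r] :
    ∑ m ∈ Finset.range r, Zm r m
        + ∑ g ∈ Finset.univ.filter
            (fun g : (Fin 11 → ZMod r) × (Fin 11 → ZMod r) ↦ g ≠ 0),
            ∑ m ∈ Finset.range r, C (omegaFactor r m g) * Zm r m
      = ∑ m ∈ Finset.range r, C (∑ g, omegaFactor r m g) * Zm r m := by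
  have term_zero : ∑ m ∈ Finset.range r, Zm r m
      = ∑ m ∈ Finset.range r, C (omegaFactor r m 0) * Zm r m := by
    simp only [omegaFactor_zero_right, map_one, one_mul]
  rw [term_zero, Finset.filter_ne',
    Finset.add_sum_erase _ (fun g ↦ ∑ m ∈ Finset.range r, C (omegaFactor r m g) * Zm r m)
      (Finset.mem_univ 0), Finset.sum_comm]
  simp only [map_sum, Finset.sum_mul]

lemma sum_range_gcd_of_prime {M : Type*} [AddCommMonoid M] {p : ℕ} (hp : p.Prime)
    (f : ℕ → ℕ → M) :
    ∑ m ∈ Finset.range p, f (p.gcd m) m = f p 0 + ∑ m ∈ Finset.Ico 1 p, f 1 m := by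
  rw [Finset.range_eq_Ico, Finset.sum_eq_sum_Ico_succ_bot hp.pos, Nat.gcd_zero_right]
  congr 1
  refine Finset.sum_congr rfl fun m hm ↦ ?_
  obtain ⟨m_pos, m_lt⟩ := Finset.mem_Ico.mp hm
  rw [(Nat.coprime_of_lt_prime (Nat.ne_of_gt m_pos) m_lt hp).gcd_eq_one]

theorem sur_zr_vafa_witten_K3_general (r : ℕ) [NeZero r] :
    Z0 r + ∑ g ∈ Finset.univ.filter
        (fun g : (Fin 11 → ZMod r) × (Fin 11 → ZMod r) ↦ g ≠ 0),
        ∑ m ∈ Finset.range r, C (omegaFactor r m g) * Zm r m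
      = C (1 / (r : ℂ) ^ 2) * FXr2 r
        + ∑ m ∈ Finset.range r, C ((r : ℂ) ^ 10 * (r.gcd m : ℂ) ^ 11) * X ^ (r ^ 2 - 1) *
            (C ((zeta r ^ m)⁻¹) * rescale (zeta r ^ m) F) := by
  rw [Z0_eq_add_sum_Zm, add_assoc, sum_Zm_add_sum_ne_zero]
  congr 1
  refine Finset.sum_congr rfl fun m _ ↦ ?_
  have coeff_eq : (r : ℂ) ^ 10 * (r.gcd m : ℂ) ^ 11 = ((r : ℂ) * r.gcd m) ^ 11 * (1 / r) := by
    field_simp [NeZero.ne (r : ℂ)]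
  rw [sum_omegaFactor, Zm, coeff_eq, map_mul]
  ring

/-- Theorem 6.10 (q-series content): for a prime `r`,
`Z₀ + ∑_{g ≠ 0} ∑_{m=0}^{r−1} ω(m,g)·Z^{(m)}
  = (1/r²)·F(X^{r²}) + r^{21}·X^{r²−1}·F(X) + r^{10}·X^{r²−1}·∑_{m=1}^{r−1} ζ^{−m}·F(ζ^m X)`. -/
theorem sur_zr_vafa_witten_K3 (r : ℕ) [Fact r.Prime] :
    Z0 r + ∑ g ∈ Finset.univ.filter
        (fun g : (Fin 11 → ZMod r) × (Fin 11 → ZMod r) => g ≠ 0),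
        ∑ m ∈ Finset.range r, C (omegaFactor r m g) * Zm r m
      = C (1/(r:ℂ)^2) * FXr2 r + C ((r:ℂ)^21) * X^(r^2-1) * F
        + C ((r:ℂ)^10) * X^(r^2-1) *
            ∑ m ∈ Finset.Ico 1 r, C ((zeta r ^ m)⁻¹) * rescale (zeta r ^ m) F := by
  rw [sur_zr_vafa_witten_K3_general, sum_range_gcd_of_prime Fact.out fun d m ↦
    C ((r : ℂ) ^ 10 * (d : ℂ) ^ 11) *
      X ^ (r ^ 2 - 1) * (C ((zeta r ^ m)⁻¹) * rescale (zeta r ^ m) F)]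
  simp [Finset.mul_sum, add_assoc, ← pow_add]
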